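/- Let (Ω, ℱ, P) be a probability space with filtration (ℱ_t)_{t∈ℕ}, let (x_t), (w_t), (η_t) be sequences of real-valued random variables with x_t, η_t, w_{t-1} being ℱ_{t-1}-measurable, let c ∈ ℝ, and suppose x_{t+1} = (1 - η_t) x_t + η_t (c + w_t) for all t. Assume: (1) there exist finite constants A, B with E[w_t² | ℱ_{t-1}] ≤ A |x_t|² + B almost surely; (2) E[w_t | ℱ_{t-1}] = 0 almost surely; (3) η_t ∈ [0,1]; (4) ∑_{t=0}^∞ η_t = ∞ almost surely; (5) ∑_{t=0}^∞ η_t² < ∞ almost surely. Then x_t converges to c almost surely. -/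

import Mathlib

open MeasureTheory Filter Topology

lemma sa_truncated
    {Ω : Type*} {m : MeasurableSpace Ω} {P : Measure Ω} [IsProbabilityMeasure P]
    (ℱ : Filtration ℕ m) (X W H : ℕ → Ω → ℝ) (A B K : ℝ) (hA : 0 ≤ A) (hB : 0 ≤ B)
    (hX : ∀ t, StronglyMeasurable[ℱ t] (X t))
    (hH : ∀ t, StronglyMeasurable[ℱ t] (H t))
    (hW2 : ∀ t, MemLp (W t) 2 P)
    (hX0 : MemLp (X 0) 2 P)
    (hrec : ∀ t ω, X (t + 1) ω = (1 - H t ω) * X t ω + H t ω * W t ω)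
    (hmom : ∀ t, ∀ᵐ ω ∂P, (H t ω) ^ 2 * (P[(fun ω => (W t ω) ^ 2) | ℱ t]) ω
      ≤ (H t ω) ^ 2 * (A * (X t ω) ^ 2 + B))
    (hmean : ∀ t, ∀ᵐ ω ∂P, (P[W t | ℱ t]) ω = 0)
    (hH01 : ∀ t ω, H t ω ∈ Set.Icc (0 : ℝ) 1)
    (hS : ∀ t ω, ∑ s ∈ Finset.range t, (H s ω) ^ 2 ≤ K) :
    ∀ᵐ ω ∂P, (∃ L, Tendsto (fun t => (X t ω) ^ 2) atTop (𝓝 L)) ∧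
      Summable (fun t => H t ω * (X t ω) ^ 2) := by
  have hHm : ∀ t, StronglyMeasurable (H t) := fun t => (hH t).mono (ℱ.le t)
  have hXm : ∀ t, StronglyMeasurable (X t) := fun t => (hX t).mono (ℱ.le t)
  set S : ℕ → Ω → ℝ := fun t ω => ∑ s ∈ Finset.range t, (H s ω) ^ 2 with hSdef
  set a : ℕ → Ω → ℝ := fun t ω => Real.exp (-((1 + A) * S t ω)) with hadef
  set D : ℕ → Ω → ℝ := fun t ω =>
    ∑ s ∈ Finset.range t, 2 * a (s + 1) ω * H s ω * (X s ω) ^ 2 with hDdef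
  have hSnn : ∀ t ω, 0 ≤ S t ω := fun t ω => Finset.sum_nonneg fun i _ => sq_nonneg _
  have ha0 : ∀ t ω, 0 < a t ω := fun t ω => Real.exp_pos _
  have ha1 : ∀ t ω, a t ω ≤ 1 := fun t ω => by
    apply Real.exp_le_one_iff.2
    have := mul_nonneg (by linarith : 0 ≤ 1 + A) (hSnn t ω)
    linarith
  have hK : ∀ t ω, S t ω ≤ K := hS
  have hDnn : ∀ t ω, 0 ≤ D t ω := fun t ω => Finset.sum_nonneg fun i _ =>
    mul_nonneg (mul_nonneg (mul_nonneg (by norm_num) (ha0 _ _).le) (hH01 i ω).1) (sq_nonneg _)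
  -- measurability
  have hSmeas_le : ∀ n t, t ≤ n + 1 → StronglyMeasurable[ℱ n] (S t) := by
    intro n t htn
    apply Finset.stronglyMeasurable_fun_sum
    intro s hs
    have : s ≤ n := by have := Finset.mem_range.1 hs; omega
    exact ((hH s).mono (ℱ.mono this)).pow 2
  have hameas_le : ∀ n t, t ≤ n + 1 → StronglyMeasurable[ℱ n] (a t) := by
    intro n t htn
    exact Real.continuous_exp.comp_stronglyMeasurable
      (((hSmeas_le n t htn).const_mul (1 + A)).neg)
  have hDmeas_le : ∀ n t, t ≤ n + 1 → StronglyMeasurable[ℱ n] (D t) := by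
    intro n t htn
    apply Finset.stronglyMeasurable_fun_sum
    intro s hs
    have hsn : s ≤ n := by have := Finset.mem_range.1 hs; omega
    exact (((hameas_le n (s+1) (by omega)).const_mul 2).mul ((hH s).mono (ℱ.mono hsn))).mul
      (((hX s).mono (ℱ.mono hsn)).pow 2)
  -- bounded multipliers preserve L2
  have hbm : ∀ (f g : Ω → ℝ), StronglyMeasurable f → (∀ ω, |f ω| ≤ 1) → MemLp g 2 P →
      MemLp (fun ω => f ω * g ω) 2 P := by
    intro f g hf hf1 hg
    refine hg.mono (hf.aestronglyMeasurable.mul hg.1) (Eventually.of_forall fun ω => ?_)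
    rw [norm_mul, Real.norm_eq_abs (f ω)]
    exact mul_le_of_le_one_left (norm_nonneg _) (hf1 ω)
  have hbi : ∀ (f g : Ω → ℝ), StronglyMeasurable f → (∀ ω, |f ω| ≤ 1) → Integrable g P →
      Integrable (fun ω => f ω * g ω) P := by
    intro f g hf hf1 hg
    refine hg.mono (hf.aestronglyMeasurable.mul hg.1) (Eventually.of_forall fun ω => ?_)
    rw [norm_mul, Real.norm_eq_abs (f ω)]
    exact mul_le_of_le_one_left (norm_nonneg _) (hf1 ω)
  have hX2 : ∀ t, MemLp (X t) 2 P := by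
    intro t
    induction t with
    | zero => exact hX0
    | succ t ih =>
      have h1 := hbm (fun ω => 1 - H t ω) (X t) (stronglyMeasurable_const.sub (hHm t))
        (fun ω => by have := hH01 t ω; rw [abs_le]; constructor <;> linarith [this.1, this.2]) ih
      have h2 := hbm (H t) (W t) (hHm t)
        (fun ω => by have := hH01 t ω; rw [abs_le]; constructor <;> linarith [this.1, this.2])
        (hW2 t)
      have h3 := h1.add h2
      have : X (t+1) = (fun ω => (1 - H t ω) * X t ω) + (fun ω => H t ω * W t ω) := by
        funext ω; exact hrec t ω
      rw [this]; exact h3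
  have hXsq : ∀ t, Integrable (fun ω => (X t ω) ^ 2) P := fun t => (hX2 t).integrable_sq
  have hWsq : ∀ t, Integrable (fun ω => (W t ω) ^ 2) P := fun t => (hW2 t).integrable_sq
  have hSint : ∀ t, Integrable (S t) P := by
    intro t
    refine Integrable.of_bound ((hSmeas_le t t (by omega)).mono (ℱ.le t)).aestronglyMeasurable K
      (Eventually.of_forall fun ω => ?_)
    rw [Real.norm_eq_abs, abs_of_nonneg (hSnn t ω)]; exact hK t ω
  have hDint : ∀ t, Integrable (D t) P := by
    intro t
    apply integrable_finsetSum
    intro s hs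
    have := (hbi (fun ω => a (s+1) ω * H s ω) (fun ω => (X s ω)^2)
      (((hameas_le s (s+1) le_rfl).mono (ℱ.le s)).mul (hHm s)) (fun ω => by
        rw [abs_of_nonneg (mul_nonneg (ha0 _ _).le (hH01 s ω).1)]
        exact mul_le_one₀ (ha1 _ _) (hH01 s ω).1 (hH01 s ω).2) (hXsq s)).const_mul 2
    refine this.congr (Eventually.of_forall fun ω => ?_)
    simp only; ring
  have haX : ∀ t, Integrable (fun ω => a t ω * (X t ω)^2) P := fun t =>
    hbi (a t) _ ((hameas_le t t (by omega)).mono (ℱ.le t))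
      (fun ω => by rw [abs_of_pos (ha0 t ω)]; exact ha1 t ω) (hXsq t)
  set V : ℕ → Ω → ℝ := fun t ω => a t ω * (X t ω)^2 + D t ω - B * S t ω with hVdef
  have hVint : ∀ t, Integrable (V t) P := fun t =>
    ((haX t).add (hDint t)).sub ((hSint t).const_mul B)
  have hVmeas : ∀ t, StronglyMeasurable[ℱ t] (V t) := fun t =>
    (((hameas_le t t (by omega)).mul ((hX t).pow 2)).add (hDmeas_le t t (by omega))).sub
      ((hSmeas_le t t (by omega)).const_mul B)
  have hVsuper : Supermartingale V ℱ P := by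
    apply supermartingale_nat hVmeas hVint
    intro t
    have habs : ∀ ω, a (t+1) ω ≤ 1 ∧ 0 ≤ a (t+1) ω ∧ 0 ≤ H t ω ∧ H t ω ≤ 1 :=
      fun ω => ⟨ha1 _ _, (ha0 _ _).le, (hH01 t ω).1, (hH01 t ω).2⟩
    have ham := hameas_le t (t+1) le_rfl
    set R : Ω → ℝ := fun ω => a (t+1) ω * (1 - H t ω)^2 * (X t ω)^2 + D (t+1) ω - B * S (t+1) ω
      with hR
    set p : Ω → ℝ := fun ω => 2 * (a (t+1) ω * (1 - H t ω) * H t ω * X t ω) with hp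
    set q : Ω → ℝ := fun ω => a (t+1) ω * (H t ω)^2 with hq
    have h1H : StronglyMeasurable[ℱ t] (fun ω => 1 - H t ω) :=
      stronglyMeasurable_const.sub (hH t)
    have hRm : StronglyMeasurable[ℱ t] R :=
      (((ham.mul (h1H.pow 2)).mul ((hX t).pow 2)).add (hDmeas_le t (t+1) le_rfl)).sub
        ((hSmeas_le t (t+1) le_rfl).const_mul B)
    have hpm : StronglyMeasurable[ℱ t] p :=
      ((((ham.mul h1H).mul (hH t)).mul (hX t))).const_mul 2
    have hqm : StronglyMeasurable[ℱ t] q := ham.mul ((hH t).pow 2)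
    have hRi : Integrable R P := by
      refine Integrable.sub (Integrable.add ?_ (hDint (t+1))) ((hSint (t+1)).const_mul B)
      refine hbi (fun ω => a (t+1) ω * (1 - H t ω)^2) _
        ((ham.mul (h1H.pow 2)).mono (ℱ.le t)) (fun ω => ?_) (hXsq t)
      obtain ⟨u1, u2, u3, u4⟩ := habs ω
      rw [abs_of_nonneg (mul_nonneg u2 (sq_nonneg _))]
      exact mul_le_one₀ u1 (sq_nonneg _) (pow_le_one₀ (by linarith) (by linarith))
    have hpi : Integrable (p * W t) P := by
      refine MemLp.integrable_mul (p := 2) (q := 2) ?_ (hW2 t)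
      refine MemLp.const_mul (hbm (fun ω => a (t+1) ω * (1 - H t ω) * H t ω) (X t)
        (((ham.mul h1H).mul (hH t)).mono (ℱ.le t)) (fun ω => ?_) (hX2 t)) 2
      obtain ⟨u1, u2, u3, u4⟩ := habs ω
      have u5 : 0 ≤ 1 - H t ω := by linarith
      rw [abs_of_nonneg (by positivity)]
      exact mul_le_one₀ (mul_le_one₀ u1 u5 (by linarith)) u3 u4
    have hqi : Integrable (q * (fun ω => (W t ω)^2)) P := by
      refine hbi q _ (hqm.mono (ℱ.le t)) (fun ω => ?_) (hWsq t)
      obtain ⟨u1, u2, u3, u4⟩ := habs ω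
      rw [abs_of_nonneg (mul_nonneg u2 (sq_nonneg _))]
      exact mul_le_one₀ u1 (sq_nonneg _) (pow_le_one₀ u3 u4)
    have hdecomp : V (t+1) = (R + p * W t) + q * (fun ω => (W t ω)^2) := by
      funext ω
      simp only [hVdef, hR, hp, hq, Pi.add_apply, Pi.mul_apply, hrec t ω]
      ring
    have e1 : P[V (t+1) | ℱ t] =ᵐ[P] P[R + p * W t | ℱ t] + P[q * (fun ω => (W t ω)^2) | ℱ t] := by
      rw [hdecomp]; exact condExp_add (hRi.add hpi) hqi (ℱ t)
    have e2 := condExp_add hRi hpi (ℱ t)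
    have e3 : P[R | ℱ t] = R := condExp_of_stronglyMeasurable (ℱ.le t) hRm hRi
    have e4 := condExp_mul_of_stronglyMeasurable_left hpm hpi ((hW2 t).integrable (by norm_num))
    have e5 := condExp_mul_of_stronglyMeasurable_left hqm hqi (hWsq t)
    filter_upwards [e1, e2, e4, e5, hmom t, hmean t] with ω e1 e2 e4 e5 e6 e7
    rw [e1, Pi.add_apply, e2, Pi.add_apply, e3, e4, e5, Pi.mul_apply, Pi.mul_apply, e7]
    obtain ⟨u1, u2, u3, u4⟩ := habs ω
    have hSs : S (t+1) ω = S t ω + (H t ω)^2 := Finset.sum_range_succ _ _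
    have hDs : D (t+1) ω = D t ω + 2 * a (t + 1) ω * H t ω * (X t ω) ^ 2 :=
      Finset.sum_range_succ _ _
    have has : a (t+1) ω * (1 + (1+A) * (H t ω)^2) ≤ a t ω := by
      have h1 : a t ω = a (t+1) ω * Real.exp ((1+A) * (H t ω)^2) := by
        simp only [hadef]
        rw [← Real.exp_add, hSs]; congr 1; ring
      rw [h1]
      refine mul_le_mul_of_nonneg_left ?_ u2
      have := Real.add_one_le_exp ((1+A) * (H t ω)^2)
      linarith
    have f1 := mul_le_mul_of_nonneg_left e6 u2
    have f2 := mul_le_mul_of_nonneg_right has (sq_nonneg (X t ω))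
    have f3 : a (t+1) ω * (B * (H t ω)^2) ≤ B * (H t ω)^2 :=
      mul_le_of_le_one_left (by positivity) u1
    simp only [hR, hp, hq, hVdef, hSs, hDs]
    linarith
  have hVlow : ∀ t ω, -(B * K) ≤ V t ω := fun t ω => by
    have h1 := mul_nonneg (ha0 t ω).le (sq_nonneg (X t ω))
    have h2 := mul_le_mul_of_nonneg_left (hK t ω) hB
    have h3 := hDnn t ω
    simp only [hVdef]; linarith
  have hsub : Submartingale (-V) ℱ P := hVsuper.neg
  have hK0 : Nonempty Ω → 0 ≤ K := fun ⟨ω⟩ => hS 0 ω |>.trans' (by simp)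
  have hbdd : ∀ n, eLpNorm ((-V) n) 1 P ≤ ((∫ ω, V 0 ω ∂P) + 2 * (B * K)).toNNReal := by
    intro n
    rw [Pi.neg_apply, eLpNorm_neg, eLpNorm_one_eq_lintegral_enorm,
      ← ofReal_integral_norm_eq_lintegral_enorm (hVint n)]
    apply ENNReal.ofReal_le_ofReal
    have h1 : ∫ ω, ‖V n ω‖ ∂P ≤ ∫ ω, (V n ω + 2 * (B * K)) ∂P := by
      refine integral_mono (hVint n).norm ((hVint n).add (integrable_const _)) fun ω => ?_
      have := hVlow n ω
      have hBK : 0 ≤ B * K := mul_nonneg hB (hK0 ⟨ω⟩)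
      simp only [Real.norm_eq_abs]
      rw [abs_le]; constructor <;> linarith
    rw [integral_add (hVint n) (integrable_const _)] at h1
    have h2 := hVsuper.setIntegral_le (Nat.zero_le n) (MeasurableSet.univ)
    simp only [Measure.restrict_univ] at h2
    simp only [integral_const, probReal_univ, one_smul] at h1
    linarith
  filter_upwards [hsub.exists_ae_tendsto_of_bdd hbdd] with ω hω
  obtain ⟨l, hl⟩ := hω
  have hVt : Tendsto (fun t => V t ω) atTop (𝓝 (-l)) := by
    have := hl.neg
    simpa using this
  have hSsum : Summable (fun t => (H t ω)^2) :=
    summable_of_sum_range_le (fun _ => sq_nonneg _) (fun n => hK n ω)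
  have hSt : Tendsto (fun t => S t ω) atTop (𝓝 (∑' t, (H t ω)^2)) :=
    hSsum.hasSum.tendsto_sum_nat
  obtain ⟨M, hM⟩ := hVt.bddAbove_range
  have hDbd : ∀ t, D t ω ≤ M + B * K := fun t => by
    have h0 := hM ⟨t, rfl⟩
    have h1 := mul_nonneg (ha0 t ω).le (sq_nonneg (X t ω))
    have h2 := mul_le_mul_of_nonneg_left (hK t ω) hB
    simp only [hVdef] at h0; linarith
  have hDsum : Summable (fun s => 2 * a (s + 1) ω * H s ω * (X s ω) ^ 2) :=
    summable_of_sum_range_le (fun i =>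
      mul_nonneg (mul_nonneg (mul_nonneg (by norm_num) (ha0 _ _).le) (hH01 i ω).1) (sq_nonneg _))
      hDbd
  have hDt := hDsum.hasSum.tendsto_sum_nat
  have hat : Tendsto (fun t => a t ω) atTop (𝓝 (Real.exp (-((1+A) * ∑' t, (H t ω)^2)))) :=
    (Real.continuous_exp.tendsto _).comp ((hSt.const_mul (1+A)).neg)
  constructor
  · have h1 := (((hVt.sub hDt).add (hSt.const_mul B))).div hat (Real.exp_pos _).ne'
    refine ⟨_, h1.congr fun t => ?_⟩
    have := (ha0 t ω).ne'
    simp only [Pi.div_apply]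
    rw [div_eq_iff this]
    simp only [hVdef, hDdef]
    ring
  · have hlow : ∀ t, Real.exp (-((1+A)*K)) ≤ a t ω := fun t => by
      apply Real.exp_le_exp.2
      have := mul_le_mul_of_nonneg_left (hK t ω) (by linarith : 0 ≤ 1 + A)
      linarith
    set e := Real.exp (-((1+A)*K)) with he
    have he0 : 0 < e := Real.exp_pos _
    refine Summable.of_nonneg_of_le (fun t => mul_nonneg (hH01 t ω).1 (sq_nonneg _)) (fun t => ?_)
      (hDsum.mul_left (1/(2*e)))
    have h1 : 0 ≤ H t ω * (X t ω)^2 := mul_nonneg (hH01 t ω).1 (sq_nonneg _)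
    have h2 := mul_le_mul_of_nonneg_right (hlow (t+1)) h1
    rw [div_mul_eq_mul_div, le_div_iff₀ (by positivity)]
    linarith

/-- the recursion driven by truncated data -/
noncomputable def saRec {Ω : Type*} (X0 : Ω → ℝ) (W H : ℕ → Ω → ℝ) : ℕ → Ω → ℝ
  | 0 => X0
  | t + 1 => fun ω => (1 - H t ω) * saRec X0 W H t ω + H t ω * W t ω

lemma sa_shifted
    {Ω : Type*} {m : MeasurableSpace Ω} {P : Measure Ω} [IsProbabilityMeasure P]
    (ℱ : Filtration ℕ m) (X W H : ℕ → Ω → ℝ) (A B : ℝ) (hA : 0 ≤ A) (hB : 0 ≤ B)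
    (hX : ∀ t, StronglyMeasurable[ℱ t] (X t))
    (hH : ∀ t, StronglyMeasurable[ℱ t] (H t))
    (hWm : ∀ t, StronglyMeasurable[ℱ (t + 1)] (W t))
    (hW2 : ∀ t, MemLp (W t) 2 P)
    (hrec : ∀ t ω, X (t + 1) ω = (1 - H t ω) * X t ω + H t ω * W t ω)
    (hmom : ∀ t, ∀ᵐ ω ∂P, (P[(fun ω => (W t ω) ^ 2) | ℱ t]) ω ≤ A * (X t ω) ^ 2 + B)
    (hmean : ∀ t, ∀ᵐ ω ∂P, (P[W t | ℱ t]) ω = 0)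
    (hH01 : ∀ t ω, H t ω ∈ Set.Icc (0 : ℝ) 1)
    (hdiv : ∀ᵐ ω ∂P, ¬ Summable (fun t => H t ω))
    (hsq : ∀ᵐ ω ∂P, Summable (fun t => (H t ω) ^ 2)) :
    ∀ᵐ ω ∂P, Tendsto (fun t => X t ω) atTop (𝓝 0) := by
  classical
  set E : ℕ → ℕ → Set Ω := fun k t =>
    {ω | |X 0 ω| ≤ k ∧ ∑ s ∈ Finset.range (t + 1), (H s ω) ^ 2 ≤ k} with hE
  set Htr : ℕ → ℕ → Ω → ℝ := fun k t => (E k t).indicator (H t) with hHtr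
  set Z : ℕ → Ω → ℝ := fun k => {ω | |X 0 ω| ≤ k}.indicator (X 0) with hZ
  set Xtr : ℕ → ℕ → Ω → ℝ := fun k => saRec (Z k) W (Htr k) with hXtr
  have hX0m : ∀ k : ℕ, MeasurableSet[ℱ 0] {ω | |X 0 ω| ≤ k} := fun k =>
    StronglyMeasurable.measurableSet_le (f := fun ω => |X 0 ω|) (g := fun _ => (k : ℝ))
      (hX 0).norm stronglyMeasurable_const
  have hEm : ∀ k t, MeasurableSet[ℱ t] (E k t) := fun k t => by
    refine MeasurableSet.inter (ℱ.mono (Nat.zero_le t) _ (hX0m k)) ?_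
    refine StronglyMeasurable.measurableSet_le
      (f := fun ω => ∑ s ∈ Finset.range (t + 1), (H s ω) ^ 2) (g := fun _ => (k : ℝ))
      ?_ stronglyMeasurable_const
    apply Finset.stronglyMeasurable_fun_sum
    intro s hs
    have : s ≤ t := by have := Finset.mem_range.1 hs; omega
    exact ((hH s).mono (ℱ.mono this)).pow 2
  have hEanti : ∀ k t, E k (t+1) ⊆ E k t := by
    rintro k t ω ⟨h1, h2⟩
    refine ⟨h1, ?_⟩
    rw [Finset.sum_range_succ] at h2
    have := sq_nonneg (H (t+1) ω)
    linarith
  have hHtrMeas : ∀ k t, StronglyMeasurable[ℱ t] (Htr k t) := fun k t =>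
    (hH t).indicator (hEm k t)
  have hXtrMeas : ∀ k t, StronglyMeasurable[ℱ t] (Xtr k t) := by
    intro k t
    induction t with
    | zero => exact (hX 0).indicator (hX0m k)
    | succ t ih =>
      have l := ℱ.mono (Nat.le_succ t)
      exact ((stronglyMeasurable_const.sub ((hHtrMeas k t).mono l)).mul (ih.mono l)).add
        (((hHtrMeas k t).mono l).mul (hWm t))
  have hagree : ∀ k t ω, ω ∈ E k t → Xtr k t ω = X t ω := by
    intro k t
    induction t with
    | zero => intro ω hω; exact Set.indicator_of_mem (s := {ω | |X 0 ω| ≤ k}) hω.1 _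
    | succ t ih =>
      intro ω hω
      have h1 := hEanti k t hω
      have h2 : Htr k t ω = H t ω := Set.indicator_of_mem h1 _
      change (1 - Htr k t ω) * Xtr k t ω + Htr k t ω * W t ω = _
      rw [h2, ih ω h1, hrec]
  have hHtrIcc : ∀ k t ω, Htr k t ω ∈ Set.Icc (0:ℝ) 1 := by
    intro k t ω
    by_cases h : ω ∈ E k t
    · rw [hHtr]; simp only [Set.indicator_of_mem h]; exact hH01 t ω
    · rw [hHtr]; simp only [Set.indicator_of_notMem h]; simp
  have hHtrSum : ∀ k t ω, ∑ s ∈ Finset.range t, (Htr k s ω)^2 ≤ (k:ℝ) := by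
    intro k t ω
    induction t with
    | zero => simp
    | succ t ih =>
      by_cases h : ω ∈ E k t
      · refine le_trans (Finset.sum_le_sum fun s _ => ?_) h.2
        by_cases hh : ω ∈ E k s
        · simp only [hHtr, Set.indicator_of_mem hh]; exact le_rfl
        · simp only [hHtr, Set.indicator_of_notMem hh]; nlinarith [sq_nonneg (H s ω)]
      · rw [Finset.sum_range_succ]
        have : Htr k t ω = 0 := Set.indicator_of_notMem h _
        rw [this]; simpa using ih
  have key : ∀ k : ℕ, ∀ᵐ ω ∂P, (∃ L, Tendsto (fun t => (Xtr k t ω) ^ 2) atTop (𝓝 L)) ∧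
      Summable (fun t => Htr k t ω * (Xtr k t ω) ^ 2) := by
    intro k
    refine sa_truncated ℱ (Xtr k) W (Htr k) A B k hA hB (hXtrMeas k) (hHtrMeas k) hW2 ?_
      (fun t ω => rfl) ?_ hmean (hHtrIcc k) (hHtrSum k)
    · refine MemLp.of_bound ((hXtrMeas k 0).mono (ℱ.le 0)).aestronglyMeasurable k
        (Eventually.of_forall fun ω => ?_)
      change ‖Z k ω‖ ≤ k
      by_cases h : ω ∈ {ω | |X 0 ω| ≤ k}
      · simp only [hZ, Set.indicator_of_mem h]; exact h
      · simp only [hZ, Set.indicator_of_notMem h]; simp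
    · intro t
      filter_upwards [hmom t] with ω hω
      by_cases h : ω ∈ E k t
      · rw [hagree k t ω h]
        exact mul_le_mul_of_nonneg_left hω (sq_nonneg _)
      · have : Htr k t ω = 0 := Set.indicator_of_notMem h _
        rw [this]; simp
  filter_upwards [ae_all_iff.2 key, hdiv, hsq] with ω hk hd hs
  obtain ⟨k, hkk⟩ := exists_nat_ge (max |X 0 ω| (∑' t, (H t ω)^2))
  have hmem : ∀ t, ω ∈ E k t := fun t =>
    ⟨(le_max_left _ _).trans hkk,
      (hs.sum_le_tsum _ (fun _ _ => sq_nonneg _)).trans ((le_max_right _ _).trans hkk)⟩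
  obtain ⟨⟨L, hL⟩, hsum⟩ := hk k
  have e1 : ∀ t, Xtr k t ω = X t ω := fun t => hagree k t ω (hmem t)
  have e2 : ∀ t, Htr k t ω = H t ω := fun t => Set.indicator_of_mem (hmem t) _
  simp only [e1, e2] at hL hsum
  have hL0 : 0 ≤ L := ge_of_tendsto' hL fun t => sq_nonneg _
  have hLz : L = 0 := by
    by_contra hne
    have hLp : 0 < L := lt_of_le_of_ne hL0 (Ne.symm hne)
    apply hd
    have hev : ∀ᶠ t in atTop, L / 2 < (X t ω)^2 := hL.eventually (lt_mem_nhds (by linarith))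
    refine Summable.of_norm_bounded_eventually_nat (hsum.mul_left (2 / L)) ?_
    filter_upwards [hev] with t ht
    rw [Real.norm_eq_abs, abs_of_nonneg (hH01 t ω).1, div_mul_eq_mul_div, le_div_iff₀ hLp]
    have := mul_le_mul_of_nonneg_left ht.le (hH01 t ω).1
    linarith
  rw [hLz] at hL
  have h3 := hL.sqrt
  simp only [Real.sqrt_sq_eq_abs, Real.sqrt_zero] at h3
  exact (tendsto_zero_iff_abs_tendsto_zero _).2 h3

/-- Stochastic approximation convergence (Lemma 1 of Singh et al. / Lemma 2 of the paper):
if `x_{t+1} = (1 - η_t) x_t + η_t (c + w_t)` with zero-mean noise of conditionally bounded second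
moment and step sizes in `[0,1]` that sum to infinity but are square-summable, then
`x_t → c` almost surely. Here `x t`, `η t` and `w (t-1)` are `ℱ (t-1)`-measurable,
expressed by a shift of index. -/
theorem stochastic_approximation_to_const
    {Ω : Type*} {m : MeasurableSpace Ω} {P : Measure Ω} [IsProbabilityMeasure P]
    (ℱ : Filtration ℕ m) (x w η : ℕ → Ω → ℝ) (c : ℝ)
    -- x_t, η_t and w_{t-1} are ℱ_{t-1}-measurable:
    (hx_meas : ∀ t : ℕ, StronglyMeasurable[ℱ t] (x (t + 1)))
    (hη_meas : ∀ t : ℕ, StronglyMeasurable[ℱ t] (η (t + 1)))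
    (hw_meas : ∀ t : ℕ, StronglyMeasurable[ℱ t] (w t))
    -- integrability, needed so the conditional expectations are meaningful:
    (hw_int : ∀ t : ℕ, Integrable (w t) P)
    (hw_sq_int : ∀ t : ℕ, Integrable (fun ω => (w t ω) ^ 2) P)
    -- the recursion:
    (hrec : ∀ t : ℕ, ∀ ω, x (t + 1) ω = (1 - η t ω) * x t ω + η t ω * (c + w t ω))
    -- (1) conditionally bounded second moments:
    (A B : ℝ)
    (hmoment : ∀ t : ℕ,
      ∀ᵐ ω ∂P, (P[(fun ω => (w (t + 1) ω) ^ 2) | ℱ t]) ω ≤ A * |x (t + 1) ω| ^ 2 + B)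
    -- (2) zero conditional mean:
    (hmean : ∀ t : ℕ, ∀ᵐ ω ∂P, (P[w (t + 1) | ℱ t]) ω = 0)
    -- (3) step sizes in [0,1]:
    (hη01 : ∀ t : ℕ, ∀ ω, η t ω ∈ Set.Icc (0 : ℝ) 1)
    -- (4) ∑ η_t = ∞ a.s.:
    (hη_div : ∀ᵐ ω ∂P, ¬ Summable (fun t => η t ω))
    -- (5) ∑ η_t² < ∞ a.s.:
    (hη_sq : ∀ᵐ ω ∂P, Summable (fun t => (η t ω) ^ 2)) :
    ∀ᵐ ω ∂P, Tendsto (fun t => x t ω) atTop (𝓝 c) := by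
  have hsh := sa_shifted (P := P) ℱ (fun t ω => x (t+1) ω - c) (fun t => w (t+1))
    (fun t => η (t+1)) (2 * |A|) (2 * |A| * c^2 + |B|) (by positivity) (by positivity)
    (fun t => (hx_meas t).sub stronglyMeasurable_const) hη_meas (fun t => hw_meas (t+1))
    (fun t => (memLp_two_iff_integrable_sq (hw_int _).1).2 (hw_sq_int _))
    (fun t ω => by simp only [hrec (t+1) ω]; ring)
    (fun t => by
      filter_upwards [hmoment t] with ω hω
      refine hω.trans ?_
      rw [sq_abs]
      have h1 : A * x (t+1) ω ^ 2 ≤ |A| * x (t+1) ω ^ 2 :=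
        mul_le_mul_of_nonneg_right (le_abs_self A) (sq_nonneg _)
      have h2 : x (t+1) ω ^ 2 ≤ 2 * (x (t+1) ω - c)^2 + 2 * c^2 := by
        nlinarith [sq_nonneg (x (t+1) ω - 2 * c)]
      have h3 := mul_le_mul_of_nonneg_left h2 (abs_nonneg A)
      linarith [le_abs_self B])
    hmean (fun t ω => hη01 _ _)
    (by
      filter_upwards [hη_div] with ω h hh
      exact h ((summable_nat_add_iff (f := fun t => η t ω) 1).1 hh))
    (by
      filter_upwards [hη_sq] with ω h
      exact (summable_nat_add_iff (f := fun t => η t ω ^ 2) 1).2 h)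
  filter_upwards [hsh] with ω h
  have h2 := h.add_const c
  simp only [sub_add_cancel, zero_add] at h2
  exact (tendsto_add_atTop_iff_nat (f := fun t => x t ω) 1).1 h2
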